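/- Let S = {P_1, ..., P_k} be a projective Kochen-Specker set of n×n projectors, and for each i let B_i be an orthonormal basis of the range (support) of P_i. Then the set of unit vectors S' = ⋃_i B_i is a weak Kochen-Specker set: every marking function f' : S' → {0,1} (assigning exactly one 1 to every orthonormal basis of ℂⁿ contained in S') assigns the value 1 to some pair of orthogonal vectors in S'. -/

import Mathlib

/-!
Given a marking function `f'` on the vectors that never marks two orthogonal vectors, put
`f P = ∑ v ∈ B P, f' v`. The vectors of `B P` are pairwise orthogonal, so `f P ≤ 1`. If finitely
many projectors of `S` sum to the identity, their bases together form an orthonormal basis of `ℂⁿ`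
(`orthogonal_of_sum_eq_one`, `isONBasis_biUnion`), so `f` sums to `1` over them. Hence `f` is a
marking function on `S`, and the projective Kochen-Specker property gives `P, P'` with
`Tr (P P') = 0` and `f P = f P' = 1`. Some `u ∈ B P` and `v ∈ B P'` are then marked, and since
`Tr (P P')` is the sum of all `|⟨u, v⟩|²` with `u ∈ B P`, `v ∈ B P'`
(`dotProduct_eq_zero_of_trace_mul_eq_zero`), they are orthogonal: a contradiction.
-/

open Matrix

/-- An orthogonal projector: a Hermitian matrix `P` with `P² = P`. -/
def IsProjector {n : ℕ} (P : Matrix (Fin n) (Fin n) ℂ) : Prop :=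
  P.IsHermitian ∧ P * P = P

/-- A marking function for a set `S` of projectors: takes values in `{0,1}` on `S`
and sums to `1` over every finite subset of `S` summing to the identity. -/
def IsMarking {n : ℕ} (S : Set (Matrix (Fin n) (Fin n) ℂ))
    (f : Matrix (Fin n) (Fin n) ℂ → ℕ) : Prop :=
  (∀ P ∈ S, f P ≤ 1) ∧
  ∀ T : Finset (Matrix (Fin n) (Fin n) ℂ), ↑T ⊆ S →
    ∑ P ∈ T, P = 1 → ∑ P ∈ T, f P = 1

/-- A projective Kochen-Specker set: every marking function assigns `1` to two
trace-orthogonal projectors in the set. -/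
def IsProjKS {n : ℕ} (S : Set (Matrix (Fin n) (Fin n) ℂ)) : Prop :=
  ∀ f, IsMarking S f →
    ∃ P ∈ S, ∃ P' ∈ S, (P * P').trace = 0 ∧ f P = 1 ∧ f P' = 1

/-- A finite set of vectors forming an orthonormal basis of `ℂⁿ`. -/
def IsONBasis {n : ℕ} (b : Finset (Fin n → ℂ)) : Prop :=
  (∀ u ∈ b, ∀ v ∈ b, star u ⬝ᵥ v = if u = v then 1 else 0) ∧ b.card = n

/-- A marking function for a set `S'` of unit vectors: takes values in `{0,1}` on `S'`
and sums to `1` over every orthonormal basis contained in `S'`. -/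
def IsVecMarking {n : ℕ} (S' : Set (Fin n → ℂ)) (f : (Fin n → ℂ) → ℕ) : Prop :=
  (∀ v ∈ S', f v ≤ 1) ∧
  ∀ b : Finset (Fin n → ℂ), ↑b ⊆ S' → IsONBasis b → ∑ v ∈ b, f v = 1

/-- A weak Kochen-Specker set: every marking function assigns `1` to two
orthogonal vectors in the set. -/
def IsWeakKS {n : ℕ} (S' : Set (Fin n → ℂ)) : Prop :=
  ∀ f, IsVecMarking S' f →
    ∃ u ∈ S', ∃ v ∈ S', star u ⬝ᵥ v = 0 ∧ f u = 1 ∧ f v = 1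

lemma trace_vecMulVec_mul {n : ℕ} (u v : Fin n → ℂ) :
    (vecMulVec u (star u) * vecMulVec v (star v)).trace
      = ((Complex.normSq (star u ⬝ᵥ v) : ℝ) : ℂ) := by
  rw [vecMulVec_mul_vecMulVec, trace_vecMulVec, dotProduct_smul, smul_eq_mul,
    Complex.normSq_eq_conj_mul_self, mul_comm]
  congr 1
  rw [starRingEnd_apply, star_dotProduct, star_star, dotProduct_comm]

lemma dotProduct_eq_zero_of_trace_mul_eq_zero {n : ℕ} (b c : Finset (Fin n → ℂ))
    (h : ((∑ u ∈ b, vecMulVec u (star u)) * (∑ v ∈ c, vecMulVec v (star v))).trace = 0)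
    {u v : Fin n → ℂ} (hu : u ∈ b) (hv : v ∈ c) : star u ⬝ᵥ v = 0 := by
  simp only [Finset.sum_mul, Finset.mul_sum, trace_sum, trace_vecMulVec_mul] at h
  have h' : ∑ x ∈ b, ∑ y ∈ c, Complex.normSq (star x ⬝ᵥ y) = 0 := by
    rw [Finset.sum_comm]
    exact_mod_cast h
  rw [Finset.sum_eq_zero_iff_of_nonneg
    (fun _ _ => Finset.sum_nonneg fun _ _ => Complex.normSq_nonneg _)] at h'
  have h2 := h' u hu
  rw [Finset.sum_eq_zero_iff_of_nonneg (fun _ _ => Complex.normSq_nonneg _)] at h2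
  exact Complex.normSq_eq_zero.mp (h2 v hv)

/-- Parseval's identity for `u ∈ B P` reads `1 = ∑ Q ∈ T, ∑ v ∈ B Q, |⟨u, v⟩|²`. The term
`Q = P`, `v = u` is already `1`, so every other term vanishes. -/
lemma orthogonal_of_sum_eq_one {n : ℕ} (T : Finset (Matrix (Fin n) (Fin n) ℂ))
    (B : Matrix (Fin n) (Fin n) ℂ → Finset (Fin n → ℂ))
    (hB : ∀ P ∈ T, ∀ u ∈ B P, star u ⬝ᵥ u = 1)
    (hsum : ∑ P ∈ T, ∑ v ∈ B P, vecMulVec v (star v) = 1)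
    {P Q : Matrix (Fin n) (Fin n) ℂ} (hP : P ∈ T) (hQ : Q ∈ T) (hPQ : P ≠ Q)
    {u v : Fin n → ℂ} (hu : u ∈ B P) (hv : v ∈ B Q) : star u ⬝ᵥ v = 0 := by
  classical
  have huu := hB P hP u hu
  have h1 : (vecMulVec u (star u) * ∑ P ∈ T, ∑ v ∈ B P, vecMulVec v (star v)).trace = 1 := by
    rw [hsum, mul_one, trace_vecMulVec, dotProduct_comm, huu]
  simp only [Finset.mul_sum, trace_sum, trace_vecMulVec_mul] at h1
  have h2 : ∑ R ∈ T, ∑ w ∈ B R, Complex.normSq (star u ⬝ᵥ w) = 1 := by exact_mod_cast h1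
  have nn : ∀ R ∈ T, 0 ≤ ∑ w ∈ B R, Complex.normSq (star u ⬝ᵥ w) :=
    fun _ _ => Finset.sum_nonneg fun _ _ => Complex.normSq_nonneg _
  have hPge : 1 ≤ ∑ w ∈ B P, Complex.normSq (star u ⬝ᵥ w) := by
    have := Finset.single_le_sum (f := fun w => Complex.normSq (star u ⬝ᵥ w))
      (fun _ _ => Complex.normSq_nonneg _) hu
    simpa [huu] using this
  have hQge : Complex.normSq (star u ⬝ᵥ v) ≤ ∑ w ∈ B Q, Complex.normSq (star u ⬝ᵥ w) :=
    Finset.single_le_sum (f := fun w => Complex.normSq (star u ⬝ᵥ w))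
      (fun _ _ => Complex.normSq_nonneg _) hv
  have h3 := Finset.add_le_sum nn hP hQ hPQ
  exact Complex.normSq_eq_zero.mp
    (le_antisymm (by linarith) (Complex.normSq_nonneg _))

lemma isONBasis_biUnion {n : ℕ} [DecidableEq (Fin n → ℂ)]
    (T : Finset (Matrix (Fin n) (Fin n) ℂ))
    (B : Matrix (Fin n) (Fin n) ℂ → Finset (Fin n → ℂ))
    (hB : ∀ P ∈ T, ∀ u ∈ B P, ∀ v ∈ B P, star u ⬝ᵥ v = if u = v then 1 else 0)
    (hsum : ∑ P ∈ T, ∑ v ∈ B P, vecMulVec v (star v) = 1) :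
    (T : Set (Matrix (Fin n) (Fin n) ℂ)).PairwiseDisjoint B ∧ IsONBasis (T.biUnion B) := by
  have hB1 : ∀ P ∈ T, ∀ u ∈ B P, star u ⬝ᵥ u = 1 := fun P hP u hu => by
    simpa using hB P hP u hu u hu
  have hdisj : (T : Set (Matrix (Fin n) (Fin n) ℂ)).PairwiseDisjoint B := by
    intro P hP Q hQ hPQ
    refine Finset.disjoint_left.mpr fun u hu hu' => ?_
    have h := orthogonal_of_sum_eq_one T B hB1 hsum hP hQ hPQ hu hu'
    rw [hB1 P hP u hu] at h
    exact one_ne_zero h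
  refine ⟨hdisj, ?_, ?_⟩
  · intro u hu v hv
    obtain ⟨P, hP, hu⟩ := Finset.mem_biUnion.mp hu
    obtain ⟨Q, hQ, hv⟩ := Finset.mem_biUnion.mp hv
    by_cases hPQ : P = Q
    · subst hPQ
      convert hB P hP u hu v hv
    · have h := orthogonal_of_sum_eq_one T B hB1 hsum hP hQ hPQ hu hv
      rw [h, if_neg]
      rintro rfl
      rw [hB1 P hP u hu] at h
      exact one_ne_zero h
  · -- The trace of the identity counts the vectors, as each rank-one projector has trace `1`.
    have htr := congrArg trace hsum
    rw [← Finset.sum_biUnion hdisj, trace_sum, trace_one, Fintype.card_fin,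
      Finset.sum_congr rfl (g := fun _ => (1 : ℂ))] at htr
    · simpa using htr
    · intro u hu
      obtain ⟨P, hP, hu⟩ := Finset.mem_biUnion.mp hu
      rw [trace_vecMulVec, dotProduct_comm, hB1 P hP u hu]

/-- If `S` is a projective KS set and `B P` is an orthonormal basis of the range of
each `P ∈ S` (orthonormal vectors whose rank-1 projectors sum to `P`), then the
union `S' = ⋃_{P∈S} B P` is a weak KS set. -/
theorem stmt_9 {n : ℕ} (S : Finset (Matrix (Fin n) (Fin n) ℂ))
    (hproj : ∀ P ∈ S, IsProjector P)
    (hKS : IsProjKS (S : Set (Matrix (Fin n) (Fin n) ℂ)))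
    (B : Matrix (Fin n) (Fin n) ℂ → Finset (Fin n → ℂ))
    (hBorth : ∀ P ∈ S, ∀ u ∈ B P, ∀ v ∈ B P,
      star u ⬝ᵥ v = if u = v then 1 else 0)
    (hBsum : ∀ P ∈ S, ∑ v ∈ B P, Matrix.vecMulVec v (star v) = P) :
    IsWeakKS (⋃ P ∈ (S : Set (Matrix (Fin n) (Fin n) ℂ)), (B P : Set (Fin n → ℂ))) := by
  classical
  intro f' hf'
  by_contra hno
  push Not at hno
  have hmem : ∀ P ∈ S, ∀ v ∈ B P,
      v ∈ ⋃ P ∈ (S : Set (Matrix (Fin n) (Fin n) ℂ)), (B P : Set (Fin n → ℂ)) :=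
    fun P hP v hv => Set.mem_biUnion (Finset.mem_coe.mpr hP) (Finset.mem_coe.mpr hv)
  have hmark : IsMarking (S : Set (Matrix (Fin n) (Fin n) ℂ)) (fun P => ∑ v ∈ B P, f' v) := by
    refine ⟨fun P hP => ?_, fun T hT hsum => ?_⟩
    · by_cases hex : ∃ v ∈ B P, f' v = 1
      · obtain ⟨v, hv, hv1⟩ := hex
        have : ∑ w ∈ B P, f' w = f' v := by
          refine Finset.sum_eq_single_of_mem v hv fun w hw hwv => ?_
          have h0 : star v ⬝ᵥ w = 0 := by rw [hBorth P hP v hv w hw, if_neg (Ne.symm hwv)]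
          have h1 := hno v (hmem P hP v hv) w (hmem P hP w hw) h0 hv1
          have h2 := hf'.1 w (hmem P hP w hw)
          lia
        exact (this.trans hv1).le
      · push Not at hex
        have : ∑ w ∈ B P, f' w = 0 := Finset.sum_eq_zero fun w hw => by
          have h1 := hex w hw
          have h2 := hf'.1 w (hmem P hP w hw)
          lia
        exact this.le.trans zero_le_one
    · have hsum' : ∑ P ∈ T, ∑ v ∈ B P, vecMulVec v (star v) = 1 :=
        (Finset.sum_congr rfl fun P hP => hBsum P (hT hP)).trans hsum
      obtain ⟨hdisj, hbasis⟩ :=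
        isONBasis_biUnion T B (fun P hP => by
          intro u hu v hv
          convert hBorth P (hT hP) u hu v hv) hsum'
      change ∑ P ∈ T, ∑ v ∈ B P, f' v = 1
      rw [← Finset.sum_biUnion hdisj]
      refine hf'.2 _ (fun v hv => ?_) hbasis
      obtain ⟨P, hP, hv⟩ := Finset.mem_biUnion.mp (Finset.mem_coe.mp hv)
      exact hmem P (hT hP) v hv
  obtain ⟨P, hP, P', hP', htr, h1, h1'⟩ := hKS _ hmark
  have marked : ∀ Q ∈ S, ∑ v ∈ B Q, f' v = 1 → ∃ v ∈ B Q, f' v = 1 := by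
    intro Q hQ hs
    obtain ⟨v, hv, hv0⟩ := Finset.exists_ne_zero_of_sum_ne_zero (hs.trans_ne one_ne_zero)
    have h2 := hf'.1 v (hmem Q hQ v hv)
    exact ⟨v, hv, by lia⟩
  obtain ⟨u, hu, hu1⟩ := marked P hP h1
  obtain ⟨v, hv, hv1⟩ := marked P' hP' h1'
  rw [← hBsum P hP, ← hBsum P' hP'] at htr
  exact hno u (hmem P hP u hu) v (hmem P' hP' v hv)
    (dotProduct_eq_zero_of_trace_mul_eq_zero _ _ htr hu hv) hu1 hv1
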